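/- Fix q, t ∈ (0,1), set λ_m = (1 - q^{2m})/(1 - t·q^{2m}), and let T be the bounded operator on ℓ²(ℕ, ℂ) with T δ_m = √(λ_{m+1}) · δ_{m+1}. Then T satisfies the two-parameter quantum disc relation T*T = q² · T T* + (1 - q²) · I + (t·(1 - q²)/(1 - t)) · (I - T T*) · (I - T*T), as an identity of bounded operators on ℓ²(ℕ, ℂ). -/

import Mathlib

/-- `ℓ²(ℕ, ℂ)`. -/
noncomputable abbrev QDisc.H : Type := lp (fun _ : ℕ => ℂ) 2

/-- The standard orthonormal basis vector `δ_m` of `ℓ²(ℕ, ℂ)`. -/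
noncomputable def QDisc.δ (m : ℕ) : QDisc.H := lp.single 2 m (1 : ℂ)

namespace QDisc

lemma inner_δ_left (n : ℕ) (x : H) : inner ℂ (δ n) x = x n := by
  simp [δ, lp.inner_single_left]

lemma δ_apply (m n : ℕ) : (δ m : H) n = if n = m then 1 else 0 := by
  simp [δ, lp.single_apply, Pi.single_apply]

/-- Two bounded operators on `ℓ²(ℕ, ℂ)` agreeing on the standard basis are equal. -/
lemma clm_ext {A B : H →L[ℂ] H} (h : ∀ m, A (δ m) = B (δ m)) : A = B := by
  refine lp.ext_continuousLinearMap (by simp) fun m => ?_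
  ext
  simpa [δ] using congrArg (fun x : H => x _) (h m)

section WeightedShift

variable {T : H →L[ℂ] H} {w : ℕ → ℝ}

lemma adjoint_shift_δ_zero (hT : ∀ m, T (δ m) = (w m : ℂ) • δ (m + 1)) :
    ContinuousLinearMap.adjoint T (δ 0) = 0 := by
  ext n
  rw [← inner_δ_left, ContinuousLinearMap.adjoint_inner_right, hT, inner_smul_left,
    inner_δ_left, δ_apply]
  simp

lemma adjoint_shift_δ_succ (hT : ∀ m, T (δ m) = (w m : ℂ) • δ (m + 1)) (m : ℕ) :
    ContinuousLinearMap.adjoint T (δ (m + 1)) = (w m : ℂ) • δ m := by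
  ext n
  rw [← inner_δ_left, ContinuousLinearMap.adjoint_inner_right, hT, inner_smul_left,
    inner_δ_left, δ_apply, lp.coeFn_smul, Pi.smul_apply, δ_apply]
  by_cases h : n = m <;> simp [h]

end WeightedShift

/-- The scalar form of the quantum disc relation, with `x = q ^ (2 * m)` and `p = q ^ 2`. -/
lemma scalar_relation {p t x : ℝ} (ht : 1 - t ≠ 0) (hx : 1 - t * x ≠ 0)
    (hpx : 1 - t * (x * p) ≠ 0) :
    (1 - x * p) / (1 - t * (x * p)) =
      p * ((1 - x) / (1 - t * x)) + (1 - p) +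
        t * (1 - p) / (1 - t) *
          ((1 - (1 - x) / (1 - t * x)) * (1 - (1 - x * p) / (1 - t * (x * p)))) := by
  generalize hd : 1 - t * x = d at *
  generalize he : 1 - t * (x * p) = e at *
  field_simp
  subst hd he
  ring

end QDisc

open QDisc in
/-- The quantum-disc weighted shift satisfies relation (3):
`T*T = q² T T* + (1-q²) I + (t(1-q²)/(1-t)) (I - T T*)(I - T*T)`. -/
theorem quantum_disc_shift_relation
    (q t : ℝ) (hq0 : 0 < q) (hq1 : q < 1) (ht0 : 0 < t) (ht1 : t < 1)
    (lam : ℕ → ℝ)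
    (hlam : ∀ m : ℕ, lam m = (1 - q ^ (2 * m)) / (1 - t * q ^ (2 * m)))
    (T : H →L[ℂ] H)
    (hT : ∀ m : ℕ, T (δ m) = (Real.sqrt (lam (m + 1)) : ℂ) • δ (m + 1)) :
    ContinuousLinearMap.adjoint T * T =
      ((q ^ 2 : ℝ) : ℂ) • (T * ContinuousLinearMap.adjoint T) +
        ((1 - q ^ 2 : ℝ) : ℂ) • (1 : H →L[ℂ] H) +
        ((t * (1 - q ^ 2) / (1 - t) : ℝ) : ℂ) •
          ((1 - T * ContinuousLinearMap.adjoint T) *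
            (1 - ContinuousLinearMap.adjoint T * T)) := by
  have pow_le (m : ℕ) : q ^ (2 * m) ≤ 1 := pow_le_one₀ hq0.le hq1.le
  have den_pos (m : ℕ) : 0 < 1 - t * q ^ (2 * m) := by
    nlinarith [pow_le m]
  have lam_nonneg (m : ℕ) : 0 ≤ lam m := by
    rw [hlam]
    exact div_nonneg (sub_nonneg.2 (pow_le m)) (den_pos m).le
  have sqrt_mul (m : ℕ) : (Real.sqrt (lam m) : ℂ) * Real.sqrt (lam m) = lam m := by
    rw [← Complex.ofReal_mul, Real.mul_self_sqrt (lam_nonneg m)]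
  have adjoint_mul_self (m : ℕ) :
      ContinuousLinearMap.adjoint T (T (δ m)) = (lam (m + 1) : ℂ) • δ m := by
    rw [hT, map_smul, adjoint_shift_δ_succ hT, smul_smul, sqrt_mul]
  have mul_adjoint_self (m : ℕ) :
      T (ContinuousLinearMap.adjoint T (δ m)) = (lam m : ℂ) • δ m := by
    cases m with
    | zero => simp [adjoint_shift_δ_zero hT, hlam]
    | succ m => rw [adjoint_shift_δ_succ hT, map_smul, hT, smul_smul, sqrt_mul]
  have lam_succ (m : ℕ) : lam (m + 1) = q ^ 2 * lam m + (1 - q ^ 2) +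
      t * (1 - q ^ 2) / (1 - t) * ((1 - lam m) * (1 - lam (m + 1))) := by
    have h := den_pos (m + 1)
    rw [hlam, hlam, mul_add, mul_one, pow_add] at *
    exact scalar_relation (sub_pos.2 ht1).ne' (den_pos m).ne' h.ne'
  refine clm_ext fun m => ?_
  simp only [add_apply, smul_apply, sub_apply, mul_apply_eq_comp,
    one_apply_eq_self, map_sub, map_smul, adjoint_mul_self, mul_adjoint_self]
  refine (congrArg (fun r : ℝ => (r : ℂ) • δ m) (lam_succ m)).trans ?_
  push_cast
  module
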